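/- Let q ∈ M be a projection and x ∈ M arbitrary. Then ‖(1 − q)x‖₂² ≤ ‖xx* − q‖₂. Similarly, for a projection p ∈ M, ‖x(1 − p)‖₂² ≤ ‖x*x − p‖₂. -/

import Mathlib

/-!
Let `e` be a projection with `e q = 0`, for instance `e = 1 - q`. Traciality gives
`‖e x‖₂² = τ(e x x*) = τ(e (x x* - q))`, which the Cauchy–Schwarz inequality for the semi-inner
product `⟪a, b⟫ = τ(a* b)` bounds by `‖e‖₂ ‖x x* - q‖₂`; moreover `‖e‖₂ ≤ ‖1‖₂`, because
`‖1‖₂² - ‖e‖₂² = τ(1 - e) = ‖1 - e‖₂²`. The bound for `x (1 - p)` is the adjoint of the one for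
`(1 - p) x*`, and the trace makes the 2-norm invariant under the adjoint.
-/

open scoped ComplexOrder

/-- The tracial 2-norm `‖x‖₂ = (τ(x*x))^{1/2}` associated to a linear functional `τ`. -/
noncomputable def tnorm {M : Type*} [Ring M] [StarRing M] [Algebra ℂ M]
    (τ : M →ₗ[ℂ] ℂ) (x : M) : ℝ :=
  Real.sqrt (τ (star x * x)).re

section PositiveFunctional

variable {M : Type*} [Ring M] [StarRing M] [Algebra ℂ M] {τ : M →ₗ[ℂ] ℂ}

theorem tnorm_nonneg (τ : M →ₗ[ℂ] ℂ) (x : M) : 0 ≤ tnorm τ x :=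
  Real.sqrt_nonneg _

theorem tnorm_sq (hτpos : ∀ x : M, 0 ≤ τ (star x * x)) (x : M) :
    tnorm τ x ^ 2 = (τ (star x * x)).re :=
  Real.sq_sqrt (Complex.nonneg_iff.1 (hτpos x)).1

theorem tnorm_sq_of_isStarProjection (hτpos : ∀ x : M, 0 ≤ τ (star x * x)) {e : M}
    (he : IsStarProjection e) : tnorm τ e ^ 2 = (τ e).re := by
  rw [tnorm_sq hτpos, he.isSelfAdjoint.star_eq, he.isIdempotentElem.eq]

theorem tnorm_le_tnorm_one_of_isStarProjection (hτpos : ∀ x : M, 0 ≤ τ (star x * x)) {e : M}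
    (he : IsStarProjection e) : tnorm τ e ≤ tnorm τ 1 := by
  have pythagoras : tnorm τ e ^ 2 + tnorm τ (1 - e) ^ 2 = tnorm τ 1 ^ 2 := by
    rw [tnorm_sq_of_isStarProjection hτpos he, tnorm_sq_of_isStarProjection hτpos he.one_sub,
      tnorm_sq_of_isStarProjection hτpos (.one M), ← Complex.add_re, ← map_add,
      add_sub_cancel]
  refine (sq_le_sq₀ (tnorm_nonneg τ e) (tnorm_nonneg τ 1)).1 ?_
  linarith [sq_nonneg (tnorm τ (1 - e))]

variable [StarModule ℂ M]

theorem conj_apply_star_mul (hτpos : ∀ x : M, 0 ≤ τ (star x * x)) (x y : M) :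
    star (τ (star y * x)) = τ (star x * y) := by
  have im_eq_zero (z : M) : (τ (star z * z)).im = 0 := (Complex.nonneg_iff.1 (hτpos z)).2.symm
  have im_add : (τ (star x * y)).im + (τ (star y * x)).im = 0 := by
    simpa [add_mul, mul_add, im_eq_zero, add_comm] using im_eq_zero (x + y)
  have re_sub : (τ (star x * y)).re - (τ (star y * x)).re = 0 := by
    simpa [add_mul, mul_add, im_eq_zero, sub_eq_add_neg, add_comm] using
      im_eq_zero (x + Complex.I • y)
  apply Complex.ext
  · simpa using (sub_eq_zero.1 re_sub).symm
  · simpa using (eq_neg_of_add_eq_zero_left im_add).symm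

/-- The Gelfand–Naimark–Segal semi-inner product `⟪x, y⟫ = τ(x* y)` of a positive functional,
whose seminorm is `tnorm τ`. -/
noncomputable abbrev gnsCore (hτpos : ∀ x : M, 0 ≤ τ (star x * x)) :
    PreInnerProductSpace.Core ℂ M where
  inner x y := τ (star x * y)
  conj_inner_symm := conj_apply_star_mul hτpos
  re_inner_nonneg x := (Complex.nonneg_iff.1 (hτpos x)).1
  add_left x y z := by rw [star_add, add_mul, map_add]
  smul_left x y r := by rw [star_smul, smul_mul_assoc, map_smul, smul_eq_mul, starRingEnd_apply]

theorem norm_apply_star_mul_le (hτpos : ∀ x : M, 0 ≤ τ (star x * x)) (x y : M) :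
    ‖τ (star x * y)‖ ≤ tnorm τ x * tnorm τ y :=
  letI := gnsCore hτpos
  InnerProductSpace.Core.norm_inner_le_norm (𝕜 := ℂ) x y

end PositiveFunctional

section Trace

variable {M : Type*} [Ring M] [StarRing M] [Algebra ℂ M] {τ : M →ₗ[ℂ] ℂ}

theorem tnorm_star (hτtr : ∀ x y : M, τ (x * y) = τ (y * x)) (x : M) :
    tnorm τ (star x) = tnorm τ x := by
  rw [tnorm, tnorm, star_star, hτtr]

theorem tnorm_mul_sq_of_isStarProjection (hτpos : ∀ x : M, 0 ≤ τ (star x * x))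
    (hτtr : ∀ x y : M, τ (x * y) = τ (y * x)) {e : M} (he : IsStarProjection e) (x : M) :
    tnorm τ (e * x) ^ 2 = (τ (e * (x * star x))).re := by
  have compress : star (e * x) * (e * x) = star x * (e * x) := by
    rw [star_mul, he.isSelfAdjoint.star_eq, mul_assoc, ← mul_assoc e e x,
      he.isIdempotentElem.eq]
  rw [tnorm_sq hτpos, compress, hτtr, mul_assoc]

variable [StarModule ℂ M]

theorem tnorm_mul_sq_le_of_mul_eq_zero (hτpos : ∀ x : M, 0 ≤ τ (star x * x))
    (hτtr : ∀ x y : M, τ (x * y) = τ (y * x)) {e q : M} (he : IsStarProjection e)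
    (heq : e * q = 0) (x : M) :
    tnorm τ (e * x) ^ 2 ≤ tnorm τ e * tnorm τ (x * star x - q) :=
  calc tnorm τ (e * x) ^ 2
      = (τ (star e * (x * star x - q))).re := by
        rw [tnorm_mul_sq_of_isStarProjection hτpos hτtr he, he.isSelfAdjoint.star_eq, mul_sub,
          heq, sub_zero]
    _ ≤ ‖τ (star e * (x * star x - q))‖ := Complex.re_le_norm _
    _ ≤ tnorm τ e * tnorm τ (x * star x - q) := norm_apply_star_mul_le hτpos _ _

theorem tnorm_one_sub_mul_sq_le (hτpos : ∀ x : M, 0 ≤ τ (star x * x))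
    (hτtr : ∀ x y : M, τ (x * y) = τ (y * x)) {q : M} (hq : IsStarProjection q) (x : M) :
    tnorm τ ((1 - q) * x) ^ 2 ≤ tnorm τ 1 * tnorm τ (x * star x - q) :=
  (tnorm_mul_sq_le_of_mul_eq_zero hτpos hτtr hq.one_sub hq.one_sub_mul_self x).trans <|
    mul_le_mul_of_nonneg_right (tnorm_le_tnorm_one_of_isStarProjection hτpos hq.one_sub)
      (tnorm_nonneg τ _)

theorem tnorm_mul_one_sub_sq_le (hτpos : ∀ x : M, 0 ≤ τ (star x * x))
    (hτtr : ∀ x y : M, τ (x * y) = τ (y * x)) {p : M} (hp : IsStarProjection p) (x : M) :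
    tnorm τ (x * (1 - p)) ^ 2 ≤ tnorm τ 1 * tnorm τ (star x * x - p) := by
  have adjoint : star (x * (1 - p)) = (1 - p) * star x := by
    rw [star_mul, hp.one_sub.isSelfAdjoint.star_eq]
  simpa only [← adjoint, tnorm_star hτtr, star_star] using
    tnorm_one_sub_mul_sq_le hτpos hτtr hp (star x)

end Trace

theorem stmt3_general {M : Type*} [Ring M] [StarRing M] [Algebra ℂ M] [StarModule ℂ M]
    (τ : M →ₗ[ℂ] ℂ) (hτpos : ∀ x : M, 0 ≤ τ (star x * x))
    (hτtr : ∀ x y : M, τ (x * y) = τ (y * x))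
    {p q : M} (hp : IsStarProjection p) (hq : IsStarProjection q) (x : M) :
    tnorm τ ((1 - q) * x) ^ 2 ≤ tnorm τ 1 * tnorm τ (x * star x - q) ∧
      tnorm τ (x * (1 - p)) ^ 2 ≤ tnorm τ 1 * tnorm τ (star x * x - p) :=
  ⟨tnorm_one_sub_mul_sq_le hτpos hτtr hq x, tnorm_mul_one_sub_sq_le hτpos hτtr hp x⟩

theorem stmt3 {M : Type*} [CStarAlgebra M]
    (τ : M →ₗ[ℂ] ℂ) (hτ1 : τ 1 = 1)
    (hτpos : ∀ x : M, 0 ≤ τ (star x * x))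
    (hτtr : ∀ x y : M, τ (x * y) = τ (y * x))
    (p q : M) (hp1 : star p = p) (hp2 : p * p = p) (hq1 : star q = q) (hq2 : q * q = q)
    (x : M) :
    tnorm τ ((1 - q) * x) ^ 2 ≤ tnorm τ (x * star x - q) ∧
      tnorm τ (x * (1 - p)) ^ 2 ≤ tnorm τ (star x * x - p) := by
  have tnorm_one : tnorm τ 1 = 1 := by simp [tnorm, hτ1]
  simpa only [tnorm_one, one_mul] using stmt3_general τ hτpos hτtr ⟨hp2, hp1⟩ ⟨hq2, hq1⟩ x
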